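/- Let ω be a measurement function and let V be a finite-step control Lyapunov function for time step M with sandwich bounds ulα(ω(ξ)) ≤ V(ξ) ≤ olα(ω(ξ)), decay function α and associated afcl q (with class-K functions κ_i satisfying ω(g^i(ξ,q(ξ))) ≤ κ_i(ω(ξ))). Let h : X → U^M be any map satisfying, for all ξ ∈ X and j = 1,…,M: g^j(ξ, h(ξ)) ∈ X, all components of h(ξ) lie in U, the terminal contraction V(g^M(ξ, h(ξ))) ≤ α(V(ξ)), and the cost-domination inequality Σ_{i=0}^{M−1} V(x(i,ξ,h(ξ))) ≤ Σ_{i=0}^{M−1} V(x(i,ξ,q(ξ))). Then h is an admissible finite-step feedback control law; in particular, for j = 1,…,M−1 one has ω(g^j(ξ, h(ξ))) ≤ ulα⁻¹( Σ_{i=0}^{M−1} olα(κ_i(ω(ξ))) ) (with κ_0 := id), and for j = M one has ω(g^M(ξ, h(ξ))) ≤ ulα⁻¹(α(olα(ω(ξ)))), and each of these bounds is a class-K function of ω(ξ). -/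

import Mathlib

open Filter Finset NNReal

noncomputable section

/-- A class-K function on `[0,∞)`: continuous, strictly increasing, zero at zero. -/
def ClassK (κ : ℝ≥0 → ℝ≥0) : Prop :=
  Continuous κ ∧ StrictMono κ ∧ κ 0 = 0

/-- A class-K∞ function: class K and unbounded. -/
def ClassKInf (κ : ℝ≥0 → ℝ≥0) : Prop :=
  ClassK κ ∧ Filter.Tendsto κ Filter.atTop Filter.atTop

/-- A class-KL function. -/
def ClassKL (β : ℝ≥0 → ℝ≥0 → ℝ≥0) : Prop :=
  Continuous (fun p : ℝ≥0 × ℝ≥0 => β p.1 p.2) ∧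
  (∀ s : ℝ≥0, ClassK fun r => β r s) ∧
  (∀ r : ℝ≥0, Antitone (fun s => β r s) ∧
    Filter.Tendsto (fun s => β r s) Filter.atTop (nhds 0))

/-- The iterates `g^j(ξ, u)` of the control system `x⁺ = g(x,u)` under the
control sequence `u` starting from `ξ`. -/
def iter {n m : ℕ} (g : (Fin n → ℝ) → (Fin m → ℝ) → (Fin n → ℝ)) (ξ : Fin n → ℝ)
    (u : ℕ → Fin m → ℝ) : ℕ → Fin n → ℝ
  | 0 => ξ
  | j + 1 => g (iter g ξ u j) (u j)

/-- `q : X → U^M` is an admissible finite-step feedback control law (afcl) of length `M`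
for the system `g` with state constraint set `X`, input constraint set `U` and
measurement function `ω`. -/
def IsAfcl {n m : ℕ} (ω : (Fin n → ℝ) → ℝ≥0) (X : Set (Fin n → ℝ)) (U : Set (Fin m → ℝ))
    (g : (Fin n → ℝ) → (Fin m → ℝ) → (Fin n → ℝ)) (M : ℕ)
    (q : (Fin n → ℝ) → ℕ → Fin m → ℝ) : Prop :=
  (∀ ξ ∈ X, ∀ j < M, q ξ j ∈ U) ∧
  (∀ ξ ∈ X, ∀ j : ℕ, 1 ≤ j → j ≤ M → iter g ξ (q ξ) j ∈ X) ∧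
  (∀ j : ℕ, 1 ≤ j → j ≤ M → ∃ κ : ℝ≥0 → ℝ≥0, ClassK κ ∧
    ∀ ξ ∈ X, ω (iter g ξ (q ξ) j) ≤ κ (ω ξ))

/-- States of the closed loop under the `M`-step feedback `q` at time instants `kM`. -/
def loopBase {n m : ℕ} (g : (Fin n → ℝ) → (Fin m → ℝ) → (Fin n → ℝ)) (M : ℕ)
    (q : (Fin n → ℝ) → ℕ → Fin m → ℝ) (ξ : Fin n → ℝ) : ℕ → Fin n → ℝ
  | 0 => ξ
  | k + 1 => iter g (loopBase g M q ξ k) (q (loopBase g M q ξ k)) M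

/-- The closed-loop trajectory `x_q(t, ξ)`: for `t = kM + j`, `j ∈ {0,…,M-1}`,
`x_q(kM + j) = g^j(x_q(kM), q(x_q(kM)))`. -/
def closedLoop {n m : ℕ} (g : (Fin n → ℝ) → (Fin m → ℝ) → (Fin n → ℝ)) (M : ℕ)
    (q : (Fin n → ℝ) → ℕ → Fin m → ℝ) (ξ : Fin n → ℝ) (t : ℕ) : Fin n → ℝ :=
  iter g (loopBase g M q ξ (t / M)) (q (loopBase g M q ξ (t / M))) (t % M)

/-!
The lower sandwich bound turns any upper bound on `V` into one on `ω`: `V x ≤ c` gives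
`ω x ≤ ulα⁻¹ c`. At an intermediate time, `V` along the `h`-trajectory is one nonnegative summand
of its cost, which is dominated by the cost of the `q`-trajectory; there the upper sandwich bound
and the `κ_i` bound each term by `olα (κ_i (ω ξ))`. At the final time the contraction bounds `V`
directly. Class K is closed under composition, finite sums and inversion, so both bounds are of
class K.
-/

namespace ClassK

theorem monotone {f : ℝ≥0 → ℝ≥0} (hf : ClassK f) : Monotone f :=
  hf.2.1.monotone

theorem comp {f g : ℝ≥0 → ℝ≥0} (hf : ClassK f) (hg : ClassK g) : ClassK (f ∘ g) :=
  ⟨hf.1.comp hg.1, hf.2.1.comp hg.2.1, by rw [Function.comp_apply, hg.2.2, hf.2.2]⟩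

theorem sum {ι : Type*} {s : Finset ι} {f : ι → ℝ≥0 → ℝ≥0} (hs : s.Nonempty)
    (hf : ∀ i ∈ s, ClassK (f i)) : ClassK (fun r => ∑ i ∈ s, f i r) :=
  ⟨continuous_finsetSum s fun i hi => (hf i hi).1,
    fun _ _ hab => Finset.sum_lt_sum_of_nonempty hs fun i hi => (hf i hi).2.1 hab,
    Finset.sum_eq_zero fun i hi => (hf i hi).2.2⟩

theorem of_orderIso (e : ℝ≥0 ≃o ℝ≥0) : ClassK e :=
  ⟨e.continuous, e.strictMono, e.map_bot⟩

theorem of_rightInverse {f g : ℝ≥0 → ℝ≥0} (hf : StrictMono f)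
    (hg : Function.RightInverse g f) : ClassK g :=
  of_orderIso (hf.orderIsoOfRightInverse f g hg).symm

end ClassK

theorem galoisConnection_of_strictMono_of_rightInverse {A B : Type*} [LinearOrder A] [Preorder B]
    {f : A → B} {g : B → A} (hf : StrictMono f) (hg : Function.RightInverse g f) :
    GaloisConnection f g :=
  (hf.orderIsoOfRightInverse f g hg).to_galoisConnection

theorem le_lowerInv_comp_upper_of_le {S A B : Type*} [Preorder A] [Preorder B]
    {ω : S → A} {V : S → B} {lower upper : A → B} {lowerInv : B → A} {α : B → B} {x z : S}
    (hlower : GaloisConnection lower lowerInv) (hα : Monotone α)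
    (hV : ∀ x, lower (ω x) ≤ V x ∧ V x ≤ upper (ω x)) (hz : V z ≤ α (V x)) :
    ω z ≤ lowerInv (α (upper (ω x))) :=
  hlower.le_u <| calc
    lower (ω z) ≤ V z := (hV z).1
    _ ≤ α (V x) := hz
    _ ≤ α (upper (ω x)) := hα (hV x).2

section CostDomination

variable {S ι A B : Type*} [Preorder A] [AddCommMonoid B] [PartialOrder B]
  {ω : S → A} {V : S → B} {lower upper : A → B} {s : Finset ι} {y : ι → S} {b : ι → A}

theorem sum_le_sum_upper [IsOrderedAddMonoid B] (hupper : Monotone upper)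
    (hV : ∀ x, V x ≤ upper (ω x)) (hy : ∀ i ∈ s, ω (y i) ≤ b i) :
    ∑ i ∈ s, V (y i) ≤ ∑ i ∈ s, upper (b i) :=
  Finset.sum_le_sum fun i hi => (hV (y i)).trans (hupper (hy i hi))

theorem le_lowerInv_sum_upper_of_sum_le_sum [IsOrderedAddMonoid B] [CanonicallyOrderedAdd B]
    {lowerInv : B → A} {x : ι → S} {j : ι} (hlower : GaloisConnection lower lowerInv)
    (hupper : Monotone upper) (hV : ∀ x, lower (ω x) ≤ V x ∧ V x ≤ upper (ω x))
    (hy : ∀ i ∈ s, ω (y i) ≤ b i) (hcost : ∑ i ∈ s, V (x i) ≤ ∑ i ∈ s, V (y i)) (hj : j ∈ s) :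
    ω (x j) ≤ lowerInv (∑ i ∈ s, upper (b i)) :=
  hlower.le_u <| calc
    lower (ω (x j)) ≤ V (x j) := (hV (x j)).1
    _ ≤ ∑ i ∈ s, V (x i) := Finset.single_le_sum_of_canonicallyOrdered (f := fun i => V (x i)) hj
    _ ≤ ∑ i ∈ s, V (y i) := hcost
    _ ≤ ∑ i ∈ s, upper (b i) := sum_le_sum_upper hupper (fun z => (hV z).2) hy

end CostDomination

theorem feedback_admissible_general {n m : ℕ} {X : Set (Fin n → ℝ)} {U : Set (Fin m → ℝ)}
    {g : (Fin n → ℝ) → (Fin m → ℝ) → (Fin n → ℝ)} {ω V : (Fin n → ℝ) → ℝ≥0}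
    {M : ℕ} (hM : 1 ≤ M) {ulα olα ulαinv α : ℝ≥0 → ℝ≥0}
    (hulα : StrictMono ulα) (hinv : Function.RightInverse ulαinv ulα)
    (holα : ClassK olα) (hα : ClassK α)
    (hsandwich : ∀ ξ, ulα (ω ξ) ≤ V ξ ∧ V ξ ≤ olα (ω ξ))
    {q h : (Fin n → ℝ) → ℕ → Fin m → ℝ}
    {κ : ℕ → ℝ≥0 → ℝ≥0} (hκ0 : κ 0 = id) (hκK : ∀ i < M, ClassK (κ i))
    (hκbound : ∀ i : ℕ, 1 ≤ i → i < M → ∀ ξ ∈ X, ω (iter g ξ (q ξ) i) ≤ κ i (ω ξ))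
    (hhU : ∀ ξ ∈ X, ∀ j < M, h ξ j ∈ U)
    (hhX : ∀ ξ ∈ X, ∀ j : ℕ, 1 ≤ j → j ≤ M → iter g ξ (h ξ) j ∈ X)
    (hhcontr : ∀ ξ ∈ X, V (iter g ξ (h ξ) M) ≤ α (V ξ))
    (hhcost : ∀ ξ ∈ X, ∑ i ∈ Finset.range M, V (iter g ξ (h ξ) i) ≤
      ∑ i ∈ Finset.range M, V (iter g ξ (q ξ) i)) :
    IsAfcl ω X U g M h ∧
    (∀ ξ ∈ X, ∀ j : ℕ, 1 ≤ j → j < M →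
      ω (iter g ξ (h ξ) j) ≤ ulαinv (∑ i ∈ Finset.range M, olα (κ i (ω ξ)))) ∧
    (∀ ξ ∈ X, ω (iter g ξ (h ξ) M) ≤ ulαinv (α (olα (ω ξ)))) ∧
    ClassK (fun r => ulαinv (∑ i ∈ Finset.range M, olα (κ i r))) ∧
    ClassK (fun r => ulαinv (α (olα r))) := by
  have hgc := galoisConnection_of_strictMono_of_rightInverse hulα hinv
  have hinvK : ClassK ulαinv := .of_rightInverse hulα hinv
  have hκ : ∀ ξ ∈ X, ∀ i ∈ Finset.range M, ω (iter g ξ (q ξ) i) ≤ κ i (ω ξ) := by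
    rintro ξ hξ (_ | i) hi
    · simp [iter, hκ0]
    · exact hκbound _ i.succ_pos (Finset.mem_range.1 hi) ξ hξ
  have hinter : ∀ ξ ∈ X, ∀ j : ℕ, 1 ≤ j → j < M →
      ω (iter g ξ (h ξ) j) ≤ ulαinv (∑ i ∈ Finset.range M, olα (κ i (ω ξ))) :=
    fun ξ hξ j _ hj => le_lowerInv_sum_upper_of_sum_le_sum (x := iter g ξ (h ξ)) hgc
      holα.monotone hsandwich (hκ ξ hξ) (hhcost ξ hξ) (Finset.mem_range.2 hj)
  have hfinal : ∀ ξ ∈ X, ω (iter g ξ (h ξ) M) ≤ ulαinv (α (olα (ω ξ))) :=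
    fun ξ hξ => le_lowerInv_comp_upper_of_le hgc hα.monotone hsandwich (hhcontr ξ hξ)
  have hinterK : ClassK (fun r => ulαinv (∑ i ∈ Finset.range M, olα (κ i r))) :=
    hinvK.comp <| .sum (Finset.nonempty_range_iff.2 (by lia)) fun i hi =>
      holα.comp (hκK i (Finset.mem_range.1 hi))
  have hfinalK : ClassK (fun r => ulαinv (α (olα r))) := hinvK.comp (hα.comp holα)
  refine ⟨⟨hhU, hhX, fun j hj hjM => ?_⟩, hinter, hfinal, hinterK, hfinalK⟩
  rcases hjM.lt_or_eq with hlt | rfl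
  · exact ⟨_, hinterK, fun ξ hξ => hinter ξ hξ j hj hlt⟩
  · exact ⟨_, hfinalK, hfinal⟩

/-- (Lemma: any feedback `h` satisfying the constraints of OCP-1 and the
cost-domination inequality w.r.t. the afcl `q` associated with the fs-CLF `V` is itself
an admissible finite-step feedback control law, with the explicit K-bounds given below). -/
theorem feedback_admissible {n m : ℕ}
    (X : Set (Fin n → ℝ)) (U : Set (Fin m → ℝ))
    (g : (Fin n → ℝ) → (Fin m → ℝ) → (Fin n → ℝ))
    (hg : ContinuousOn (fun p : (Fin n → ℝ) × (Fin m → ℝ) => g p.1 p.2) (X ×ˢ U))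
    (ω : (Fin n → ℝ) → ℝ≥0) (hω : Continuous ω) (hωzero : ∃ x, ω x = 0)
    (M : ℕ) (hM : 1 ≤ M)
    (V : (Fin n → ℝ) → ℝ≥0) (hV : Continuous V)
    (ulα olα : ℝ≥0 → ℝ≥0) (hulα : ClassKInf ulα) (holα : ClassKInf olα)
    (ulαinv : ℝ≥0 → ℝ≥0)
    (hinvl : Function.LeftInverse ulαinv ulα) (hinvr : Function.RightInverse ulαinv ulα)
    (hsandwich : ∀ ξ, ulα (ω ξ) ≤ V ξ ∧ V ξ ≤ olα (ω ξ))
    (q : (Fin n → ℝ) → ℕ → Fin m → ℝ) (hq : IsAfcl ω X U g M q)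
    (α : ℝ≥0 → ℝ≥0) (hα : ClassKInf α) (hαlt : ∀ s : ℝ≥0, 0 < s → α s < s)
    (hdecay : ∀ ξ ∈ X, V (iter g ξ (q ξ) M) ≤ α (V ξ))
    -- the class-K functions `κ_i` of the afcl `q`, with `κ_0 := id`
    (κ : ℕ → ℝ≥0 → ℝ≥0) (hκ0 : κ 0 = id) (hκK : ∀ i < M, ClassK (κ i))
    (hκbound : ∀ i : ℕ, 1 ≤ i → i < M → ∀ ξ ∈ X, ω (iter g ξ (q ξ) i) ≤ κ i (ω ξ))
    -- the feedback `h` satisfying the constraints of OCP-1 …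
    (h : (Fin n → ℝ) → ℕ → Fin m → ℝ)
    (hhU : ∀ ξ ∈ X, ∀ j < M, h ξ j ∈ U)
    (hhX : ∀ ξ ∈ X, ∀ j : ℕ, 1 ≤ j → j ≤ M → iter g ξ (h ξ) j ∈ X)
    (hhcontr : ∀ ξ ∈ X, V (iter g ξ (h ξ) M) ≤ α (V ξ))
    -- … and the cost-domination inequality
    (hhcost : ∀ ξ ∈ X,
      ∑ i ∈ Finset.range M, V (iter g ξ (h ξ) i) ≤
        ∑ i ∈ Finset.range M, V (iter g ξ (q ξ) i)) :
    -- `h` is an admissible finite-step feedback control law,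
    IsAfcl ω X U g M h ∧
    -- with the explicit bounds: for `j = 1,…,M-1`,
    (∀ ξ ∈ X, ∀ j : ℕ, 1 ≤ j → j < M →
      ω (iter g ξ (h ξ) j) ≤ ulαinv (∑ i ∈ Finset.range M, olα (κ i (ω ξ)))) ∧
    -- for `j = M`,
    (∀ ξ ∈ X, ω (iter g ξ (h ξ) M) ≤ ulαinv (α (olα (ω ξ)))) ∧
    -- and each of these bounds is a class-K function of `ω(ξ)`.
    ClassK (fun r => ulαinv (∑ i ∈ Finset.range M, olα (κ i r))) ∧
    ClassK (fun r => ulαinv (α (olα r))) :=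
  feedback_admissible_general hM hulα.1.2.1 hinvr holα.1 hα.1 hsandwich hκ0 hκK hκbound
    hhU hhX hhcontr hhcost
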